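/- arXiv:2104.04710 — 2 statements merged into one kernel-verified Lean document; each statement's English description precedes it below -/
import Mathlib

section
/- (Lemma 1, Lipschitz continuity of reservoir systems on graphs.) Let Ã be a symmetric N×N real matrix, W an H×H real matrix, V an F×H real matrix, and X an N×F real matrix. Then the reservoir map Φ : ℝ^{N×H} → ℝ^{N×H} defined by Φ(M) = tanh(Ã M W + X V) is Lipschitz continuous with respect to the Frobenius norm with Lipschitz constant K = ρ(Ã) · ‖W‖₂; that is, for all N×H real matrices H and Z, ‖Φ(H) − Φ(Z)‖_F ≤ ρ(Ã) · ‖W‖₂ · ‖H − Z‖_F. -/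
noncomputable def frobNorm {m n : Type*} [Fintype m] [Fintype n]
    (M : Matrix m n ℝ) : ℝ :=
  Real.sqrt (∑ i, ∑ j, (M i j) ^ 2)

noncomputable def specNorm {m n : ℕ} (M : Matrix (Fin m) (Fin n) ℝ) : ℝ :=
  ‖LinearMap.toContinuousLinearMap (Matrix.toEuclideanLin M)‖

noncomputable def specRad {n : ℕ} (A : Matrix (Fin n) (Fin n) ℝ)
    (hA : A.IsHermitian) : ℝ :=
  ⨆ i, |hA.eigenvalues i|

noncomputable def mtanh {m n : Type*} (M : Matrix m n ℝ) : Matrix m n ℝ :=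
  Matrix.of fun i j => Real.tanh (M i j)

noncomputable def resMap {N F Hd : ℕ} (Atil : Matrix (Fin N) (Fin N) ℝ)
    (W : Matrix (Fin Hd) (Fin Hd) ℝ) (V : Matrix (Fin F) (Fin Hd) ℝ)
    (X : Matrix (Fin N) (Fin F) ℝ) (M : Matrix (Fin N) (Fin Hd) ℝ) :
    Matrix (Fin N) (Fin Hd) ℝ :=
  mtanh (Atil * M * W + X * V)

/-! The squared Frobenius norm is the sum of the squared Euclidean norms of the columns, so left
multiplication by a matrix costs at most its spectral norm; transposing gives the same bound on the
right. An entrywise Lipschitz map is Lipschitz for the Frobenius norm, and `tanh` is `1`-Lipschitz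
because its derivative is `1 / cosh ^ 2`. Finally, unitary diagonalisation identifies the spectral
norm of a symmetric matrix with its spectral radius. -/

open WithLp
open scoped NNReal

section FrobeniusNorm

open scoped Matrix Matrix.Norms.L2Operator

variable {l m n p : Type*} [Fintype l] [Fintype m] [Fintype n] [Fintype p]

theorem frobNorm_nonneg (M : Matrix m n ℝ) : 0 ≤ frobNorm M :=
  Real.sqrt_nonneg _

theorem frobNorm_sq (M : Matrix m n ℝ) : frobNorm M ^ 2 = ∑ i, ∑ j, M i j ^ 2 :=
  Real.sq_sqrt (by positivity)

theorem frobNorm_transpose (M : Matrix m n ℝ) : frobNorm Mᵀ = frobNorm M :=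
  congrArg Real.sqrt Finset.sum_comm

theorem frobNorm_sq_eq_sum_norm_col_sq (M : Matrix m n ℝ) :
    frobNorm M ^ 2 = ∑ j, ‖toLp 2 (M.col j)‖ ^ 2 := by
  simp only [← frobNorm_transpose M, frobNorm_sq, EuclideanSpace.real_norm_sq_eq,
    Matrix.transpose_apply, Matrix.col_apply]

theorem frobNorm_map_sub_map_le {K : ℝ≥0} {σ : ℝ → ℝ} (hσ : LipschitzWith K σ)
    (M M' : Matrix m n ℝ) : frobNorm (M.map σ - M'.map σ) ≤ K * frobNorm (M - M') := by
  have entry_le (i : m) (j : n) :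
      (M.map σ - M'.map σ) i j ^ 2 ≤ (K : ℝ) ^ 2 * (M - M') i j ^ 2 := by
    rw [← mul_pow, sq_le_sq, abs_mul, NNReal.abs_eq]
    exact hσ.dist_le_mul (M i j) (M' i j)
  refine le_of_sq_le_sq ?_ (mul_nonneg K.coe_nonneg (frobNorm_nonneg _))
  calc
    frobNorm (M.map σ - M'.map σ) ^ 2 = ∑ i, ∑ j, (M.map σ - M'.map σ) i j ^ 2 := frobNorm_sq _
    _ ≤ ∑ i, ∑ j, (K : ℝ) ^ 2 * (M - M') i j ^ 2 :=
      Finset.sum_le_sum fun i _ ↦ Finset.sum_le_sum fun j _ ↦ entry_le i j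
    _ = (K * frobNorm (M - M')) ^ 2 := by simp only [← Finset.mul_sum, mul_pow, frobNorm_sq]

theorem frobNorm_mul_le_l2OpNorm_mul [DecidableEq m] (A : Matrix l m ℝ) (M : Matrix m n ℝ) :
    frobNorm (A * M) ≤ ‖A‖ * frobNorm M := by
  have col_le (j : n) : ‖toLp 2 ((A * M).col j)‖ ≤ ‖A‖ * ‖toLp 2 (M.col j)‖ :=
    A.l2_opNorm_mulVec (toLp 2 (M.col j))
  refine le_of_sq_le_sq ?_ (mul_nonneg (norm_nonneg A) (frobNorm_nonneg M))
  calc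
    frobNorm (A * M) ^ 2 = ∑ j, ‖toLp 2 ((A * M).col j)‖ ^ 2 := frobNorm_sq_eq_sum_norm_col_sq _
    _ ≤ ∑ j, (‖A‖ * ‖toLp 2 (M.col j)‖) ^ 2 := by
      gcongr with j
      exact col_le j
    _ = (‖A‖ * frobNorm M) ^ 2 := by
      simp only [mul_pow, ← Finset.mul_sum, frobNorm_sq_eq_sum_norm_col_sq]

theorem frobNorm_mul_le_mul_l2OpNorm [DecidableEq n] (M : Matrix l m ℝ) (B : Matrix m n ℝ) :
    frobNorm (M * B) ≤ frobNorm M * ‖B‖ := by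
  classical
  calc
    frobNorm (M * B) = frobNorm (Bᵀ * Mᵀ) := by rw [← Matrix.transpose_mul, frobNorm_transpose]
    _ ≤ ‖Bᵀ‖ * frobNorm Mᵀ := frobNorm_mul_le_l2OpNorm_mul Bᵀ Mᵀ
    _ = frobNorm M * ‖B‖ := by
      rw [← Matrix.conjTranspose_eq_transpose_of_trivial, Matrix.l2_opNorm_conjTranspose,
        frobNorm_transpose, mul_comm]

theorem reservoir_map_lipschitz_general [DecidableEq m] [DecidableEq p]
    {K : ℝ≥0} {σ : ℝ → ℝ} (hσ : LipschitzWith K σ) (A : Matrix l m ℝ) (W : Matrix n p ℝ)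
    (B : Matrix l p ℝ) (M M' : Matrix m n ℝ) :
    frobNorm ((A * M * W + B).map σ - (A * M' * W + B).map σ) ≤
      K * (‖A‖ * ‖W‖) * frobNorm (M - M') :=
  calc
    frobNorm ((A * M * W + B).map σ - (A * M' * W + B).map σ)
      ≤ K * frobNorm (A * M * W + B - (A * M' * W + B)) := frobNorm_map_sub_map_le hσ _ _
    _ = K * frobNorm (A * (M - M') * W) := by
      rw [add_sub_add_right_eq_sub, ← Matrix.sub_mul, ← Matrix.mul_sub]
    _ ≤ K * (frobNorm (A * (M - M')) * ‖W‖) := by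
      gcongr
      exact frobNorm_mul_le_mul_l2OpNorm _ _
    _ ≤ K * (‖A‖ * frobNorm (M - M') * ‖W‖) := by
      gcongr
      exact frobNorm_mul_le_l2OpNorm_mul _ _
    _ = K * (‖A‖ * ‖W‖) * frobNorm (M - M') := by ring

end FrobeniusNorm

section SpectralNorm

open scoped Matrix.Norms.L2Operator

theorem pi_norm_eq_iSup_norm {ι : Type*} [Fintype ι] {E : ι → Type*}
    [∀ i, SeminormedAddGroup (E i)] (f : ∀ i, E i) : ‖f‖ = ⨆ i, ‖f i‖ := by
  simp only [Pi.norm_def, Finset.sup_univ_eq_ciSup, NNReal.coe_iSup, coe_nnnorm]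

theorem l2OpNorm_eq_iSup_abs_eigenvalues {𝕜 n : Type*} [RCLike 𝕜] [Fintype n] [DecidableEq n]
    {A : Matrix n n 𝕜} (hA : A.IsHermitian) : ‖A‖ = ⨆ i, |hA.eigenvalues i| :=
  calc
    ‖A‖ = ‖Matrix.diagonal (RCLike.ofReal ∘ hA.eigenvalues : n → 𝕜)‖ := by
      conv_lhs => rw [hA.spectral_theorem]
      rw [Unitary.conjStarAlgAut_apply, ← Unitary.coe_star, CStarRing.norm_mul_coe_unitary,
        CStarRing.norm_coe_unitary_mul]
    _ = ⨆ i, |hA.eigenvalues i| := by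
      simp only [Matrix.l2_opNorm_diagonal, pi_norm_eq_iSup_norm, Function.comp_apply,
        RCLike.norm_ofReal]

theorem specRad_eq_l2OpNorm {n : ℕ} {A : Matrix (Fin n) (Fin n) ℝ} (hA : A.IsHermitian) :
    specRad A hA = ‖A‖ :=
  (l2OpNorm_eq_iSup_abs_eigenvalues hA).symm

theorem specNorm_eq_l2OpNorm {m n : ℕ} (M : Matrix (Fin m) (Fin n) ℝ) : specNorm M = ‖M‖ :=
  rfl

end SpectralNorm

theorem hasDerivAt_tanh (x : ℝ) : HasDerivAt Real.tanh (1 / Real.cosh x ^ 2) x := by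
  have h := (Real.hasDerivAt_sinh x).fun_div (Real.hasDerivAt_cosh x) (Real.cosh_pos x).ne'
  simpa only [← Real.tanh_eq_sinh_div_cosh, ← sq, Real.cosh_sq_sub_sinh_sq] using h

theorem lipschitzWith_tanh : LipschitzWith 1 Real.tanh := by
  refine lipschitzWith_of_nnnorm_deriv_le (fun x ↦ (hasDerivAt_tanh x).differentiableAt) fun x ↦ ?_
  have one_le_cosh_sq : 1 ≤ Real.cosh x ^ 2 := one_le_pow₀ (Real.one_le_cosh x)
  rw [(hasDerivAt_tanh x).deriv, ← NNReal.coe_le_coe, coe_nnnorm,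
    Real.norm_of_nonneg (by positivity)]
  exact div_le_one_of_le₀ one_le_cosh_sq (by positivity)

theorem mtanh_eq_map {m n : Type*} (M : Matrix m n ℝ) : mtanh M = M.map Real.tanh :=
  rfl

/-- Lemma 1: the reservoir map is Lipschitz with constant ρ(Ã)·‖W‖₂. -/
theorem reservoir_map_lipschitz {N F Hd : ℕ}
    (Atil : Matrix (Fin N) (Fin N) ℝ) (hA : Atil.IsHermitian)
    (W : Matrix (Fin Hd) (Fin Hd) ℝ) (V : Matrix (Fin F) (Fin Hd) ℝ)
    (X : Matrix (Fin N) (Fin F) ℝ) :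
    ∀ H Z : Matrix (Fin N) (Fin Hd) ℝ,
      frobNorm (resMap Atil W V X H - resMap Atil W V X Z)
        ≤ specRad Atil hA * specNorm W * frobNorm (H - Z) := by
  intro H Z
  simpa only [resMap, mtanh_eq_map, specRad_eq_l2OpNorm, specNorm_eq_l2OpNorm, NNReal.coe_one,
    one_mul] using reservoir_map_lipschitz_general lipschitzWith_tanh Atil W (X * V) H Z
end

section
/- (Corollary 1, number of iterations is increasing in the spectral radius.) Fix real numbers c > 0 (playing the role of ‖W‖₂), ε > 0, and h > 0 (playing the role of ‖tanh(X V)‖_F) with ε ≤ h, and define g(r) = (ln ε + ln(1 − r c) − ln h) / ln(r c) for r with 0 < r c < 1. Then g is strictly increasing on this domain: for all r₁, r₂ with 0 < r₁ < r₂ and r₂ c < 1, g(r₁) < g(r₂). In particular, keeping the reservoir weight matrices and the graph input features fixed, the number of iterations required for convergence in Theorem 1 is an increasing function of the spectral radius ρ(Ã) of the normalized adjacency matrix. -/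
theorem strictMonoOn_div_of_neg {α 𝕜 : Type*} [Preorder α] [Field 𝕜] [LinearOrder 𝕜]
    [IsStrictOrderedRing 𝕜] {f g : α → 𝕜} {s : Set α} (hf : AntitoneOn f s)
    (hg : StrictMonoOn g s) (hf_neg : ∀ x ∈ s, f x < 0) (hg_neg : ∀ x ∈ s, g x < 0) :
    StrictMonoOn (fun x ↦ f x / g x) s := by
  intro x hx y hy hxy
  calc f x / g x
      = -f x / -g x := (neg_div_neg_eq _ _).symm
    _ < -f y / -g y := div_lt_div₀' (neg_le_neg (hf hx hy hxy.le)) (neg_lt_neg (hg hx hy hxy))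
        (neg_pos.2 (hf_neg y hy)) (neg_pos.2 (hg_neg y hy))
    _ = f y / g y := neg_div_neg_eq _ _

theorem antitoneOn_log_one_sub : AntitoneOn (fun x : ℝ ↦ Real.log (1 - x)) (Set.Iio 1) :=
  fun _ _ _ hy hxy ↦ Real.log_le_log (sub_pos.2 hy) (sub_le_sub_left hxy 1)

theorem strictMonoOn_add_log_one_sub_div_log {a : ℝ} (ha : a ≤ 0) :
    StrictMonoOn (fun x : ℝ ↦ (a + Real.log (1 - x)) / Real.log x) (Set.Ioo 0 1) := by
  have numerator_neg : ∀ x ∈ Set.Ioo (0 : ℝ) 1, a + Real.log (1 - x) < 0 := fun x hx ↦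
    add_neg_of_nonpos_of_neg ha (Real.log_neg (sub_pos.2 hx.2) (sub_lt_self 1 hx.1))
  exact strictMonoOn_div_of_neg
    ((antitoneOn_log_one_sub.mono Set.Ioo_subset_Iio_self).const_add a)
    (Real.strictMonoOn_log.mono Set.Ioo_subset_Ioi_self)
    numerator_neg fun x hx ↦ Real.log_neg hx.1 hx.2

/-- Corollary 1: the bound on the number of iterations
g(r) = (ln ε + ln(1 − r c) − ln h)/ln(r c) is strictly increasing in r
on the domain 0 < r c < 1. -/
theorem iteration_bound_strictMono (c ε h : ℝ)
    (hc : 0 < c) (hε : 0 < ε) (hh : 0 < h) (hεh : ε ≤ h)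
    (r₁ r₂ : ℝ) (hr₁ : 0 < r₁) (hr₁₂ : r₁ < r₂) (hr₂ : r₂ * c < 1) :
    (Real.log ε + Real.log (1 - r₁ * c) - Real.log h) / Real.log (r₁ * c)
      < (Real.log ε + Real.log (1 - r₂ * c) - Real.log h) / Real.log (r₂ * c) := by
  have hlog : Real.log ε - Real.log h ≤ 0 := sub_nonpos.2 (Real.log_le_log hε hεh)
  have hK₁ : 0 < r₁ * c := mul_pos hr₁ hc
  have hK₁₂ : r₁ * c < r₂ * c := mul_lt_mul_of_pos_right hr₁₂ hc
  simpa only [add_sub_right_comm] using strictMonoOn_add_log_one_sub_div_log hlog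
    ⟨hK₁, hK₁₂.trans hr₂⟩ ⟨hK₁.trans hK₁₂, hr₂⟩ hK₁₂
end
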